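/- Fix an integer d ≥ 2 and θ ∈ ℝ. For each integer n ≥ 1 set T_d(n) = ((d−1)/(2d))·log n and t_n = T_d(n) + θ, and let p_n = exp(−d·t_n/(d−1)) = n^{−1/2}·e^{−dθ/(d−1)}. For n large enough that t_n ≥ 0, define the probability mass function μ_n on functions x : Fin n → Fin d by μ_n(x) = ∏_{i=1}^{n} q_n(x(i)), where q_n(0) = (1 + (d−1)p_n)/d and q_n(j) = (1 − p_n)/d for j ≠ 0, and let π_n be the uniform distribution on Fin n → Fin d, π_n(x) = d^{−n}. Then the total variation distance (1/2)·Σ_x |μ_n(x) − d^{−n}| converges, as n → ∞, to 2·Φ((√(d−1)/2)·e^{−dθ/(d−1)}) − 1, where Φ is the cumulative distribution function of the standard normal distribution. -/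

import Mathlib

open Filter

/-- The standard normal cumulative distribution function. -/
noncomputable def stdNormalCDF (x : ℝ) : ℝ :=
  ∫ t in Set.Iic x, Real.exp (-t ^ 2 / 2) / Real.sqrt (2 * Real.pi)

/-!
With respect to the uniform distribution, `μ_n` has density `∏ (1 + p_n f (x_i))`, where
`f = d 1_{0} - 1` has mean `0` and variance `d - 1`. Since `√n p_n → c`, the expansion
`log (1 + y) = y - y² / 2 + O(y³)`, the central limit theorem for the linear term and the law of
large numbers for the quadratic one show that the log-likelihood ratio converges in distribution to
`N(-σ² / 2, σ²)` with `σ² = c² (d - 1)`. The total variation distance is the uniform expectation of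
the positive part of `1 - density`, a bounded continuous function of the log-likelihood ratio, so it
converges to `E[(1 - exp W)⁺]` with `W ~ N(-σ² / 2, σ²)`. Tilting by `exp` turns the law of `W` into
`N(σ² / 2, σ²)`, so this is `Φ(σ / 2) - Φ(-σ / 2) = 2 Φ(σ / 2) - 1`.
-/

open MeasureTheory ProbabilityTheory Set Topology
open scoped NNReal

section Gaussian

lemma stdNormalCDF_eq_measureReal_Iic (x : ℝ) :
    stdNormalCDF x = (gaussianReal 0 1).real (Iic x) := by
  rw [measureReal_def, gaussianReal_apply_eq_integral 0 one_ne_zero,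
    ENNReal.toReal_ofReal (integral_nonneg fun _ ↦ gaussianPDFReal_nonneg _ _ _)]
  refine setIntegral_congr_fun measurableSet_Iic fun t _ ↦ ?_
  simp [gaussianPDFReal, div_eq_inv_mul]

lemma gaussianReal_real_Iic (m : ℝ) {v : ℝ≥0} (hv : v ≠ 0) (x : ℝ) :
    (gaussianReal m v).real (Iic x) = stdNormalCDF ((x - m) / √v) := by
  have hσ : 0 < √(v : ℝ) := Real.sqrt_pos.2 (by exact_mod_cast pos_iff_ne_zero.2 hv)
  have hlaw : HasLaw (fun y ↦ √(v : ℝ) * y + m) (gaussianReal m v) (gaussianReal 0 1) := by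
    convert gaussianReal_add_const
      (gaussianReal_const_mul (X := fun y ↦ y) HasLaw.id √(v : ℝ)) m using 2
    · rw [mul_zero, zero_add]
    · exact NNReal.eq (by simp)
  rw [stdNormalCDF_eq_measureReal_Iic, ← hlaw.map_eq,
    map_measureReal_apply (by fun_prop) measurableSet_Iic]
  congr 1
  ext y
  simp [le_div_iff₀' hσ, le_sub_iff_add_le]

lemma stdNormalCDF_neg (x : ℝ) : stdNormalCDF (-x) = 1 - stdNormalCDF x := by
  have hsymm : (gaussianReal 0 1).map (fun y ↦ -y) = gaussianReal 0 1 := by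
    simp [gaussianReal_map_neg]
  have := nullSingletonClass_gaussianReal (μ := 0) one_ne_zero
  rw [stdNormalCDF_eq_measureReal_Iic, stdNormalCDF_eq_measureReal_Iic,
    ← probReal_compl_eq_one_sub measurableSet_Iic, compl_Iic]
  conv_lhs => rw [← hsymm, map_measureReal_apply measurable_neg measurableSet_Iic]
  rw [show (fun y : ℝ ↦ -y) ⁻¹' Iic (-x) = Ici x by ext; simp]
  exact measureReal_congr Ioi_ae_eq_Ici.symm

lemma gaussianPDFReal_neg_half_mul_exp (v : ℝ≥0) (y : ℝ) :
    gaussianPDFReal (-(v / 2)) v y * Real.exp y = gaussianPDFReal (v / 2) v y := by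
  obtain rfl | hv := eq_or_ne v 0
  · simp
  rw [gaussianPDFReal, gaussianPDFReal, mul_assoc, ← Real.exp_add]
  congr 2
  have : (v : ℝ) ≠ 0 := by exact_mod_cast hv
  field

lemma integral_max_one_sub_exp_gaussianReal_neg_half (v : ℝ≥0) :
    ∫ y, max (1 - Real.exp y) 0 ∂gaussianReal (-(v / 2)) v = 2 * stdNormalCDF (√v / 2) - 1 := by
  obtain rfl | hv := eq_or_ne v 0
  · have hhalf : 2 * stdNormalCDF 0 = 1 := by
      have hsymm := stdNormalCDF_neg 0
      rw [neg_zero] at hsymm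
      linarith
    simp [hhalf]
  have hdensity (y : ℝ) : gaussianPDFReal (-(v / 2)) v y • max (1 - Real.exp y) 0 =
      (Iic 0).indicator
        (fun y ↦ gaussianPDFReal (-(v / 2)) v y - gaussianPDFReal (v / 2) v y) y := by
    simp_rw [smul_eq_mul, ← gaussianPDFReal_neg_half_mul_exp]
    rcases le_or_gt y 0 with hy | hy
    · rw [indicator_of_mem (mem_Iic.2 hy), max_eq_left (by simpa using hy)]
      ring
    · rw [indicator_of_notMem (notMem_Iic.2 hy), max_eq_right (by simpa using hy.le), mul_zero]
  have hIic (m : ℝ) : ∫ y in Iic 0, gaussianPDFReal m v y = stdNormalCDF (-m / √v) := by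
    rw [← zero_sub, ← gaussianReal_real_Iic m hv, measureReal_def,
      gaussianReal_apply_eq_integral m hv,
      ENNReal.toReal_ofReal (integral_nonneg fun _ ↦ gaussianPDFReal_nonneg _ _ _)]
  rw [integral_gaussianReal_eq_integral_smul hv]
  simp_rw [hdensity]
  rw [integral_indicator measurableSet_Iic, integral_sub
    (integrable_gaussianPDFReal _ _).integrableOn (integrable_gaussianPDFReal _ _).integrableOn,
    hIic, hIic, neg_neg, neg_div, stdNormalCDF_neg, div_right_comm, Real.div_sqrt]
  ring

lemma integral_max_one_sub_exp_gaussianReal (c : ℝ) (v : ℝ≥0) :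
    ∫ y, max (1 - Real.exp (c * y - c ^ 2 * v / 2)) 0 ∂gaussianReal 0 v =
      2 * stdNormalCDF (|c| * √v / 2) - 1 := by
  set w : ℝ≥0 := .mk (c ^ 2) (sq_nonneg c) * v
  have hw : (w : ℝ) = c ^ 2 * v := by simp [w]
  have hlaw : HasLaw (fun y ↦ c * y - c ^ 2 * v / 2) (gaussianReal (-(w / 2)) w)
      (gaussianReal 0 v) := by
    convert gaussianReal_sub_const
      (gaussianReal_const_mul (X := fun y ↦ y) HasLaw.id c) (c ^ 2 * v / 2) using 2
    rw [hw, mul_zero, zero_sub]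
  have hsqrt : √(w : ℝ) = |c| * √v := by
    rw [hw, Real.sqrt_mul (sq_nonneg c), Real.sqrt_sq_eq_abs]
  rw [← hsqrt, ← integral_max_one_sub_exp_gaussianReal_neg_half w]
  exact hlaw.integral_comp (f := fun y ↦ max (1 - Real.exp y) 0)
    (Continuous.aestronglyMeasurable (by fun_prop))

end Gaussian

section LogExpansion

lemma abs_log_one_add_sub_le {x : ℝ} (hx : |x| ≤ 1 / 2) :
    |Real.log (1 + x) - x + x ^ 2 / 2| ≤ 2 * |x| ^ 3 := by
  have htaylor := Real.abs_log_sub_add_sum_range_le (x := -x) (by rw [abs_neg]; linarith) 2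
  have hsum : ∑ i ∈ Finset.range 2, (-x) ^ (i + 1) / ((i : ℝ) + 1) = -x + x ^ 2 / 2 := by
    norm_num [Finset.sum_range_succ]
  rw [hsum, abs_neg, sub_neg_eq_add] at htaylor
  calc |Real.log (1 + x) - x + x ^ 2 / 2|
      = |-x + x ^ 2 / 2 + Real.log (1 + x)| := by ring_nf
    _ ≤ |x| ^ 3 / (1 - |x|) := htaylor
    _ ≤ |x| ^ 3 / 2⁻¹ := by gcongr; linarith
    _ = 2 * |x| ^ 3 := by ring

variable {ε : ℕ → ℝ} {c : ℝ}

lemma tendsto_zero_of_tendsto_sqrt_mul (hε : Tendsto (fun n : ℕ ↦ √n * ε n) atTop (𝓝 c)) :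
    Tendsto ε atTop (𝓝 0) := by
  have hinv : Tendsto (fun n : ℕ ↦ (√(n : ℝ))⁻¹) atTop (𝓝 0) :=
    tendsto_inv_atTop_zero.comp (Real.tendsto_sqrt_atTop.comp tendsto_natCast_atTop_atTop)
  have hprod := hinv.mul hε
  rw [zero_mul] at hprod
  refine hprod.congr' ?_
  filter_upwards [eventually_gt_atTop 0] with n hn
  exact inv_mul_cancel_left₀ (Real.sqrt_pos.2 (Nat.cast_pos.2 hn)).ne' _

lemma tendsto_mul_sq_of_tendsto_sqrt_mul (hε : Tendsto (fun n : ℕ ↦ √n * ε n) atTop (𝓝 c)) :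
    Tendsto (fun n : ℕ ↦ n * ε n ^ 2) atTop (𝓝 (c ^ 2)) :=
  (hε.pow 2).congr fun n ↦ by rw [mul_pow, Real.sq_sqrt n.cast_nonneg]

lemma tendsto_abs_mul_zero_of_tendsto_sqrt_mul
    (hε : Tendsto (fun n : ℕ ↦ √n * ε n) atTop (𝓝 c)) (B : ℝ) :
    Tendsto (fun n ↦ |ε n| * B) atTop (𝓝 0) := by
  simpa only [abs_zero, zero_mul] using (tendsto_zero_of_tendsto_sqrt_mul hε).abs.mul_const B

lemma abs_sum_log_one_add_mul_sub_le {ι : Type*} {B e : ℝ} {x : ι → ℝ} (hx : ∀ k, |x k| ≤ B)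
    (he : |e| * B ≤ 1 / 2) (s : Finset ι) :
    |∑ k ∈ s, Real.log (1 + e * x k) - e * ∑ k ∈ s, x k + e ^ 2 * (∑ k ∈ s, x k ^ 2) / 2| ≤
      s.card * (2 * (|e| * B) ^ 3) := by
  have hbound (k : ι) : |e * x k| ≤ |e| * B :=
    (abs_mul _ _).trans_le (mul_le_mul_of_nonneg_left (hx k) (abs_nonneg e))
  calc |∑ k ∈ s, Real.log (1 + e * x k) - e * ∑ k ∈ s, x k + e ^ 2 * (∑ k ∈ s, x k ^ 2) / 2|
      = |∑ k ∈ s, (Real.log (1 + e * x k) - e * x k + (e * x k) ^ 2 / 2)| := by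
        simp only [Finset.sum_add_distrib, Finset.sum_sub_distrib, Finset.mul_sum, mul_pow,
          Finset.sum_div]
    _ ≤ ∑ k ∈ s, |Real.log (1 + e * x k) - e * x k + (e * x k) ^ 2 / 2| :=
        Finset.abs_sum_le_sum_abs _ _
    _ ≤ ∑ _k ∈ s, 2 * (|e| * B) ^ 3 := Finset.sum_le_sum fun k _ ↦
        (abs_log_one_add_sub_le ((hbound k).trans he)).trans (by gcongr; exact hbound k)
    _ = s.card * (2 * (|e| * B) ^ 3) := by rw [Finset.sum_const, nsmul_eq_mul]

lemma tendsto_sum_log_one_add_mul_sub (hε : Tendsto (fun n : ℕ ↦ √n * ε n) atTop (𝓝 c))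
    {B v : ℝ} {x : ℕ → ℝ} (hx : ∀ k, |x k| ≤ B)
    (hv : Tendsto (fun n : ℕ ↦ (∑ k ∈ Finset.range n, x k ^ 2) / n) atTop (𝓝 v)) :
    Tendsto (fun n : ℕ ↦ ∑ k ∈ Finset.range n, Real.log (1 + ε n * x k) -
      ε n * ∑ k ∈ Finset.range n, x k) atTop (𝓝 (-(c ^ 2 * v / 2))) := by
  have hεB := tendsto_abs_mul_zero_of_tendsto_sqrt_mul hε B
  have herror : Tendsto (fun n : ℕ ↦ n * (2 * (|ε n| * B) ^ 3)) atTop (𝓝 0) := by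
    have := ((tendsto_mul_sq_of_tendsto_sqrt_mul hε).mul hεB).const_mul (2 * B ^ 2)
    rw [mul_zero, mul_zero] at this
    exact this.congr fun n ↦ by rw [← sq_abs (ε n)]; ring
  have hquad : Tendsto (fun n : ℕ ↦ ε n ^ 2 * (∑ k ∈ Finset.range n, x k ^ 2) / 2) atTop
      (𝓝 (c ^ 2 * v / 2)) := by
    refine (((tendsto_mul_sq_of_tendsto_sqrt_mul hε).mul hv).div_const 2).congr' ?_
    filter_upwards [eventually_ne_atTop 0] with n hn
    have : (n : ℝ) ≠ 0 := Nat.cast_ne_zero.2 hn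
    field_simp
  have htaylor : Tendsto (fun n : ℕ ↦ ∑ k ∈ Finset.range n, Real.log (1 + ε n * x k) -
      ε n * ∑ k ∈ Finset.range n, x k + ε n ^ 2 * (∑ k ∈ Finset.range n, x k ^ 2) / 2)
      atTop (𝓝 0) := by
    refine squeeze_zero_norm' ?_ herror
    filter_upwards [hεB.eventually_le_const one_half_pos] with n hn
    simpa using abs_sum_log_one_add_mul_sub_le hx hn (Finset.range n)
  simpa using htaylor.sub hquad

lemma prod_one_add_mul_eq_exp_sum_log {ι : Type*} {B e : ℝ} {x : ι → ℝ} (hx : ∀ k, |x k| ≤ B)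
    (he : |e| * B < 1) (s : Finset ι) :
    ∏ k ∈ s, (1 + e * x k) = Real.exp (∑ k ∈ s, Real.log (1 + e * x k)) := by
  rw [Real.exp_sum]
  refine Finset.prod_congr rfl fun k _ ↦ (Real.exp_log ?_).symm
  have : |e * x k| ≤ |e| * B :=
    (abs_mul _ _).trans_le (mul_le_mul_of_nonneg_left (hx k) (abs_nonneg e))
  linarith [neg_abs_le (e * x k)]

end LogExpansion

lemma half_integral_abs_sub_one {Ω : Type*} {mΩ : MeasurableSpace Ω} {P : Measure Ω}
    [IsProbabilityMeasure P] {Z : Ω → ℝ} (hZ : Integrable Z P) (hmean : ∫ ω, Z ω ∂P = 1) :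
    1 / 2 * ∫ ω, |Z ω - 1| ∂P = ∫ ω, max (1 - Z ω) 0 ∂P := by
  have habs (z : ℝ) : |z - 1| = 2 * max (1 - z) 0 + (z - 1) := by
    rcases le_total z 1 with hz | hz
    · rw [abs_of_nonpos (by linarith), max_eq_left (by linarith)]
      ring
    · rw [abs_of_nonneg (by linarith), max_eq_right (by linarith)]
      ring
  have hpos : Integrable (fun ω ↦ max (1 - Z ω) 0) P := ((integrable_const 1).sub hZ).pos_part
  have hcentered : Integrable (fun ω ↦ Z ω - 1) P := hZ.sub (integrable_const 1)
  have hcentered_mean : ∫ ω, (Z ω - 1) ∂P = 0 := by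
    simp [integral_sub hZ (integrable_const 1), hmean]
  simp_rw [habs]
  rw [integral_add (hpos.const_mul 2) hcentered, integral_const_mul, hcentered_mean]
  ring

lemma tendsto_integral_comp_of_tendstoInDistribution {ι E Ω' : Type*} {Ω : ι → Type*}
    {l : Filter ι} [TopologicalSpace E] [MeasurableSpace E] [OpensMeasurableSpace E]
    {mΩ : ∀ i, MeasurableSpace (Ω i)} {P : ∀ i, Measure (Ω i)} [∀ i, IsProbabilityMeasure (P i)]
    {mΩ' : MeasurableSpace Ω'} {P' : Measure Ω'} [IsProbabilityMeasure P']
    {X : ∀ i, Ω i → E} {Y : Ω' → E} (h : TendstoInDistribution X l Y P P')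
    (g : BoundedContinuousFunction E ℝ) :
    Tendsto (fun i ↦ ∫ ω, g (X i ω) ∂P i) l (𝓝 (∫ ω, g (Y ω) ∂P')) := by
  have := ProbabilityMeasure.tendsto_iff_forall_integral_tendsto.1 h.tendsto g
  simp only [ProbabilityMeasure.coe_mk] at this
  rw [integral_map h.aemeasurable_limit g.continuous.measurable.aestronglyMeasurable] at this
  refine this.congr fun i ↦ ?_
  rw [integral_map (h.forall_aemeasurable i) g.continuous.measurable.aestronglyMeasurable]

section LikelihoodRatio

variable {Ω : Type*} {mΩ : MeasurableSpace Ω} {P : Measure Ω} [IsProbabilityMeasure P]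
  {X : ℕ → Ω → ℝ} {ε : ℕ → ℝ} {B c : ℝ}

lemma tendstoInDistribution_sum_log_one_add_mul {Ω' : Type*} {mΩ' : MeasurableSpace Ω'}
    {P' : Measure Ω'} [IsProbabilityMeasure P'] {Y : Ω' → ℝ}
    (hY : HasLaw Y (gaussianReal 0 Var[X 0; P].toNNReal) P')
    (hindep : iIndepFun X P) (hident : ∀ k, IdentDistrib (X k) (X 0) P P)
    (hB : ∀ᵐ ω ∂P, ∀ k, |X k ω| ≤ B) (hmean : P[X 0] = 0)
    (hε : Tendsto (fun n : ℕ ↦ √n * ε n) atTop (𝓝 c)) :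
    TendstoInDistribution
      (fun (n : ℕ) ω ↦ ∑ k ∈ Finset.range n, Real.log (1 + ε n * X k ω)) atTop
      (fun ω ↦ c * Y ω - c ^ 2 * Var[X 0; P] / 2) (fun _ ↦ P) P' := by
  have hmeas (k : ℕ) : AEMeasurable (X k) P := (hident k).aemeasurable_fst
  have hL2 : MemLp (X 0) 2 P :=
    .of_bound (hmeas 0).aestronglyMeasurable B (by filter_upwards [hB] with ω hω using hω 0)
  have hCLT : TendstoInDistribution (fun (n : ℕ) ω ↦ (√n)⁻¹ * ∑ k ∈ Finset.range n, X k ω)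
      atTop Y (fun _ ↦ P) P' := by
    simpa [hmean] using tendstoInDistribution_inv_sqrt_mul_sum_sub hY hL2 hindep hident
  have hLLN : ∀ᵐ ω ∂P, Tendsto (fun n : ℕ ↦ (∑ k ∈ Finset.range n, X k ω ^ 2) / n) atTop
      (𝓝 Var[X 0; P]) := by
    rw [variance_of_integral_eq_zero (hmeas 0) hmean]
    exact strong_law_ae_real (fun k ω ↦ X k ω ^ 2) hL2.integrable_sq
      (fun i j hij ↦ (hindep.indepFun hij).comp (measurable_id.pow_const 2)
        (measurable_id.pow_const 2))
      (fun k ↦ (hident k).comp (measurable_id.pow_const 2))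
  let R (n : ℕ) (ω : Ω) : ℝ := ∑ k ∈ Finset.range n, Real.log (1 + ε n * X k ω) -
    ε n * ∑ k ∈ Finset.range n, X k ω
  have hR_meas (n : ℕ) : AEMeasurable (fun ω ↦ (√n * ε n, R n ω)) P := by fun_prop
  have hR : TendstoInMeasure P (fun (n : ℕ) ω ↦ (√n * ε n, R n ω)) atTop
      (fun _ ↦ (c, -(c ^ 2 * Var[X 0; P] / 2))) := by
    refine tendstoInMeasure_of_tendsto_ae (fun n ↦ (hR_meas n).aestronglyMeasurable) ?_
    filter_upwards [hB, hLLN] with ω hω hvar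
    exact hε.prodMk_nhds (tendsto_sum_log_one_add_mul_sub hε hω hvar)
  convert hCLT.continuous_comp_prodMk_of_tendstoInMeasure_const
    (g := fun z : ℝ × ℝ × ℝ ↦ z.2.1 * z.1 + z.2.2) (by fun_prop) hR hR_meas using 2 with n
  · ext ω
    obtain rfl | hn := eq_or_ne n 0
    · simp [R]
    have : √(n : ℝ) ≠ 0 := Real.sqrt_ne_zero'.2 (by positivity)
    simp only [R]
    field
  · ring

lemma integral_prod_one_add_mul_eq_one {ι : Type*} [Fintype ι] {X : ι → Ω → ℝ}
    (hindep : iIndepFun X P) (hint : ∀ k, Integrable (X k) P) (hmean : ∀ k, P[X k] = 0) (e : ℝ) :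
    ∫ ω, ∏ k, (1 + e * X k ω) ∂P = 1 := by
  have hfactors : iIndepFun (fun k ω ↦ 1 + e * X k ω) P :=
    hindep.comp (fun _ x ↦ 1 + e * x) (by fun_prop)
  rw [hfactors.integral_fun_prod_eq_prod_integral fun k ↦ by fun_prop]
  refine Finset.prod_eq_one fun k _ ↦ ?_
  rw [integral_add (integrable_const 1) ((hint k).const_mul e), integral_const_mul, hmean]
  simp

/-- As soon as `∏ k : Fin n, (1 + ε n * X k)` is nonnegative, the left-hand side is the total
variation distance between `P` and the measure with this density with respect to `P`. -/
theorem tendsto_half_integral_abs_prod_one_add_mul_sub_one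
    (hindep : iIndepFun X P) (hident : ∀ k, IdentDistrib (X k) (X 0) P P)
    (hB : ∀ᵐ ω ∂P, ∀ k, |X k ω| ≤ B) (hmean : P[X 0] = 0)
    (hε : Tendsto (fun n : ℕ ↦ √n * ε n) atTop (𝓝 c)) :
    Tendsto (fun n ↦ 1 / 2 * ∫ ω, |∏ k : Fin n, (1 + ε n * X k ω) - 1| ∂P) atTop
      (𝓝 (2 * stdNormalCDF (|c| * √Var[X 0; P] / 2) - 1)) := by
  have hmeas (k : ℕ) : AEMeasurable (X k) P := (hident k).aemeasurable_fst
  have hint (k : ℕ) : Integrable (X k) P :=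
    .of_bound (hmeas k).aestronglyMeasurable B (by filter_upwards [hB] with ω hω using hω k)
  have hlim := tendstoInDistribution_sum_log_one_add_mul HasLaw.id hindep hident hB hmean hε
  let g : BoundedContinuousFunction ℝ ℝ := .ofNormedAddCommGroup
    (fun y ↦ max (1 - Real.exp y) 0) (by fun_prop) 1 fun y ↦ by
      rw [Real.norm_of_nonneg (le_max_right _ _)]
      exact max_le (by linarith [Real.exp_pos y]) zero_le_one
  have hg := tendsto_integral_comp_of_tendstoInDistribution hlim g
  have hvar : (Var[X 0; P].toNNReal : ℝ) = Var[X 0; P] :=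
    Real.coe_toNNReal _ (variance_nonneg _ _)
  have hvalue := integral_max_one_sub_exp_gaussianReal c Var[X 0; P].toNNReal
  rw [hvar] at hvalue
  rw [← hvalue]
  refine hg.congr' ?_
  filter_upwards [(tendsto_abs_mul_zero_of_tendsto_sqrt_mul hε B).eventually_lt_const one_pos]
    with n hn
  have hone := integral_prod_one_add_mul_eq_one (hindep.precomp (Fin.val_injective (n := n)))
    (fun k ↦ hint k) (fun k ↦ (hident k).integral_eq.trans hmean) (ε n)
  rw [half_integral_abs_sub_one (.of_integral_ne_zero (by simp [hone])) hone]
  refine integral_congr_ae ?_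
  filter_upwards [hB] with ω hω
  rw [← Finset.prod_range fun k ↦ 1 + ε n * X k ω, prod_one_add_mul_eq_exp_sum_log hω hn]
  rfl

end LikelihoodRatio

section ProductMeasure

lemma integral_pi_eq_sum {ι : Type*} [Fintype ι] [DecidableEq ι] {α : ι → Type*}
    [∀ i, Fintype (α i)] {mα : ∀ i, MeasurableSpace (α i)} [∀ i, MeasurableSingletonClass (α i)]
    (μ : ∀ i, Measure (α i)) [∀ i, IsFiniteMeasure (μ i)] (g : (∀ i, α i) → ℝ) :
    ∫ x, g x ∂Measure.pi μ = ∑ x, (∏ i, (μ i).real {x i}) * g x := by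
  rw [integral_fintype .of_finite]
  simp_rw [measureReal_def, Measure.pi_singleton, ENNReal.toReal_prod, smul_eq_mul]

variable {α : Type*} {mα : MeasurableSpace α} {μ : Measure α} [IsProbabilityMeasure μ]
  {f : α → ℝ} {ε : ℕ → ℝ} {c : ℝ}

theorem tendsto_half_integral_pi_abs_prod_one_add_mul_sub_one {B : ℝ} (hf : Measurable f)
    (hB : ∀ a, |f a| ≤ B) (hmean : μ[f] = 0)
    (hε : Tendsto (fun n : ℕ ↦ √n * ε n) atTop (𝓝 c)) :
    Tendsto (fun n ↦ 1 / 2 * ∫ x, |∏ i : Fin n, (1 + ε n * f (x i)) - 1| ∂Measure.pi fun _ ↦ μ)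
      atTop (𝓝 (2 * stdNormalCDF (|c| * √Var[f; μ] / 2) - 1)) := by
  obtain ⟨Ω, mΩ, P, ξ, hξmeas, hξlaw, hξindep, hP⟩ := exists_iid ℕ μ
  have hvar : Var[f ∘ ξ 0; P] = Var[f; μ] := by
    rw [← (hξlaw 0).map_eq, variance_map hf.aemeasurable (hξmeas 0).aemeasurable]
  rw [← hvar]
  refine (tendsto_half_integral_abs_prod_one_add_mul_sub_one (P := P) (X := fun k ↦ f ∘ ξ k)
    (hξindep.comp (fun _ ↦ f) fun _ ↦ hf)
    (fun k ↦ ((hξlaw k).identDistrib (hξlaw 0)).comp hf)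
    (.of_forall fun ω k ↦ hB _)
    (by rw [← hmean]; exact (hξlaw 0).integral_comp hf.aestronglyMeasurable) hε).congr fun n ↦ ?_
  have hpi : HasLaw (fun ω (i : Fin n) ↦ ξ i ω) (Measure.pi fun _ ↦ μ) P :=
    (hξindep.precomp Fin.val_injective).hasLaw_pi fun i ↦ hξlaw i
  congr 1
  exact hpi.integral_comp (f := fun x ↦ |∏ i : Fin n, (1 + ε n * f (x i)) - 1|)
    (Measurable.aestronglyMeasurable (by fun_prop))

variable [Fintype α] [MeasurableSingletonClass α]

theorem tendsto_half_sum_abs_prod_mul_one_add_mul_sub_prod (hmean : μ[f] = 0)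
    (hε : Tendsto (fun n : ℕ ↦ √n * ε n) atTop (𝓝 c)) :
    Tendsto (fun n ↦ 1 / 2 * ∑ x : Fin n → α,
      |∏ i, μ.real {x i} * (1 + ε n * f (x i)) - ∏ i, μ.real {x i}|)
      atTop (𝓝 (2 * stdNormalCDF (|c| * √Var[f; μ] / 2) - 1)) := by
  refine (tendsto_half_integral_pi_abs_prod_one_add_mul_sub_one (.of_discrete) (B := ∑ a, |f a|)
    (fun a ↦ Finset.single_le_sum (f := fun a ↦ |f a|) (fun _ _ ↦ abs_nonneg _)
      (Finset.mem_univ a)) hmean hε).congr fun n ↦ ?_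
  rw [integral_pi_eq_sum]
  congr! 2 with x
  have hweight : 0 ≤ ∏ i, μ.real {x i} := Finset.prod_nonneg fun _ _ ↦ measureReal_nonneg
  rw [Finset.prod_mul_distrib, ← mul_sub_one, abs_mul, abs_of_nonneg hweight]

end ProductMeasure

section CompleteGraph

variable {α : Type*} [Fintype α]

section Uniform

variable [MeasurableSpace α] [MeasurableSingletonClass α]

lemma measureReal_uniformOn_univ_singleton (a : α) :
    (uniformOn univ : Measure α).real {a} = (Fintype.card α : ℝ)⁻¹ := by
  simp [measureReal_def, uniformOn_univ]

lemma integral_uniformOn_univ (g : α → ℝ) :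
    ∫ a, g a ∂uniformOn univ = (∑ a, g a) / Fintype.card α := by
  rw [integral_fintype .of_finite]
  simp_rw [measureReal_uniformOn_univ_singleton, smul_eq_mul, ← Finset.mul_sum, div_eq_inv_mul]

end Uniform

variable [DecidableEq α]

/-- The function whose multiple `p * vertexScore a₀` perturbs the uniform density to the density of
the one-coordinate walk on the complete graph on `α` started from `a₀`, when the walk forgets its
starting point with probability `1 - p`. -/
def vertexScore (a₀ a : α) : ℝ :=
  if a = a₀ then Fintype.card α - 1 else -1

lemma sum_vertexScore (a₀ : α) : ∑ a, vertexScore a₀ a = 0 := by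
  have (a : α) : vertexScore a₀ a = (if a = a₀ then (Fintype.card α : ℝ) else 0) - 1 := by
    unfold vertexScore
    split_ifs <;> simp
  simp [this]

lemma sum_vertexScore_sq (a₀ : α) :
    ∑ a, vertexScore a₀ a ^ 2 = Fintype.card α * (Fintype.card α - 1) := by
  have (a : α) : vertexScore a₀ a ^ 2 =
      (if a = a₀ then (Fintype.card α : ℝ) else 0) * (Fintype.card α - 2) + 1 := by
    unfold vertexScore
    split_ifs <;> ring
  simp_rw [this, Finset.sum_add_distrib, ← Finset.sum_mul, Finset.sum_ite_eq', Finset.mem_univ,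
    if_true, Finset.sum_const, Finset.card_univ, nsmul_eq_mul]
  ring

variable [MeasurableSpace α] [MeasurableSingletonClass α]

lemma integral_vertexScore (a₀ : α) : ∫ a, vertexScore a₀ a ∂uniformOn univ = 0 := by
  rw [integral_uniformOn_univ, sum_vertexScore, zero_div]

lemma variance_vertexScore (a₀ : α) :
    Var[vertexScore a₀; uniformOn univ] = Fintype.card α - 1 := by
  have : (Fintype.card α : ℝ) ≠ 0 := by
    exact_mod_cast (Fintype.card_pos_iff.2 ⟨a₀⟩).ne'
  rw [variance_of_integral_eq_zero (by fun_prop) (integral_vertexScore a₀)]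
  simp only [integral_uniformOn_univ, sum_vertexScore_sq]
  field

end CompleteGraph

theorem tv_cutoff_complete_graph_product_general {α : Type*} [Fintype α] [DecidableEq α] (a₀ : α)
    {p : ℕ → ℝ} {c : ℝ} (hp : Tendsto (fun n : ℕ ↦ √n * p n) atTop (𝓝 c)) {q : ℕ → α → ℝ}
    (hq : ∀ n a, q n a = if a = a₀ then (1 + ((Fintype.card α : ℝ) - 1) * p n) / Fintype.card α
      else (1 - p n) / Fintype.card α) :
    Tendsto (fun n ↦ 1 / 2 * ∑ x : Fin n → α, |∏ i, q n (x i) - ((Fintype.card α : ℝ) ^ n)⁻¹|)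
      atTop (𝓝 (2 * stdNormalCDF (√(Fintype.card α - 1) / 2 * |c|) - 1)) := by
  let _ : MeasurableSpace α := ⊤
  have : Nonempty α := ⟨a₀⟩
  have hlim := tendsto_half_sum_abs_prod_mul_one_add_mul_sub_prod (integral_vertexScore a₀) hp
  rw [variance_vertexScore, mul_comm |c|, mul_div_right_comm] at hlim
  have hqdensity (n : ℕ) (a : α) :
      q n a = (Fintype.card α : ℝ)⁻¹ * (1 + p n * vertexScore a₀ a) := by
    rw [hq, vertexScore]
    split_ifs <;> ring
  refine hlim.congr fun n ↦ ?_
  simp_rw [measureReal_uniformOn_univ_singleton, hqdensity, Finset.prod_const, Finset.card_univ,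
    Fintype.card_fin, inv_pow]

lemma tendsto_sqrt_mul_exp_cutoff_window {d : ℝ} (hd : 1 < d) (θ : ℝ) :
    Tendsto (fun n : ℕ ↦ √n *
        Real.exp (-(d * ((d - 1) / (2 * d) * Real.log n + θ)) / (d - 1))) atTop
      (𝓝 (Real.exp (-(d * θ) / (d - 1)))) := by
  refine tendsto_const_nhds.congr' ?_
  filter_upwards [eventually_gt_atTop 0] with n hn
  have hsqrt : 0 < √(n : ℝ) := Real.sqrt_pos.2 (Nat.cast_pos.2 hn)
  have hd₁ : d - 1 ≠ 0 := (sub_pos.2 hd).ne'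
  conv_rhs => rw [← Real.exp_log hsqrt, ← Real.exp_add, Real.log_sqrt n.cast_nonneg]
  congr 1
  field

theorem tv_cutoff_complete_graph_product (d : ℕ) (hd : 2 ≤ d) (θ : ℝ)
    (p : ℕ → ℝ)
    (hp : ∀ n : ℕ, p n =
      Real.exp (-((d : ℝ) * (((d : ℝ) - 1) / (2 * (d : ℝ)) * Real.log n + θ)) / ((d : ℝ) - 1)))
    (q : ℕ → Fin d → ℝ)
    (hq : ∀ (n : ℕ) (j : Fin d), q n j =
      if (j : ℕ) = 0 then (1 + ((d : ℝ) - 1) * p n) / (d : ℝ) else (1 - p n) / (d : ℝ)) :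
    Tendsto
      (fun n : ℕ =>
        (1 / 2 : ℝ) * ∑ x : Fin n → Fin d, |(∏ i : Fin n, q n (x i)) - ((d : ℝ) ^ n)⁻¹|)
      atTop
      (nhds (2 * stdNormalCDF
          (Real.sqrt ((d : ℝ) - 1) / 2 * Real.exp (-((d : ℝ) * θ) / ((d : ℝ) - 1))) - 1)) := by
  have : NeZero d := ⟨by lia⟩
  have hlim := tendsto_sqrt_mul_exp_cutoff_window (d := d) (by exact_mod_cast hd) θ
  simp only [← hp] at hlim
  simpa only [Fintype.card_fin, Real.abs_exp] using
    tv_cutoff_complete_graph_product_general (0 : Fin d) hlim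
      (by simpa only [Fintype.card_fin, Fin.ext_iff, Fin.val_zero] using hq)
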